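/- arXiv:2203.01533 — 3 statements merged into one kernel-verified Lean document; each statement's English description precedes it below -/
import Mathlib

section
/- Let r ≥ 1 and let M be a real symmetric r×r matrix. Then M satisfies (Hyp) if and only if M satisfies (NDC), i.e. there exists g ∈ ℝ^r such that for every v ∈ ℝ^r with ⟨v, M g⟩ = 0 one has ⟨v, M v⟩ ≤ 0. -/
open Matrix

/-- A real symmetric `r × r` matrix `M` satisfies (Hyp) if for all `v, w ∈ ℝ^r` with
`⟨w, M w⟩ > 0` one has `⟨v, M w⟩² ≥ ⟨v, M v⟩ · ⟨w, M w⟩`. -/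
def SatisfiesHyp {r : ℕ} (M : Matrix (Fin r) (Fin r) ℝ) : Prop :=
  ∀ v w : Fin r → ℝ, 0 < w ⬝ᵥ M.mulVec w →
    (v ⬝ᵥ M.mulVec w) ^ 2 ≥ (v ⬝ᵥ M.mulVec v) * (w ⬝ᵥ M.mulVec w)

/-- `M` satisfies (NDC): there exists `g ∈ ℝ^r` such that every `v ∈ ℝ^r` with
`⟨v, M g⟩ = 0` satisfies `⟨v, M v⟩ ≤ 0`. -/
def SatisfiesNDC {r : ℕ} (M : Matrix (Fin r) (Fin r) ℝ) : Prop :=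
  ∃ g : Fin r → ℝ, ∀ v : Fin r → ℝ, v ⬝ᵥ M.mulVec g = 0 → v ⬝ᵥ M.mulVec v ≤ 0

/-! Let `B` be symmetric and nonpositive on the kernel of a functional `φ`, and let `B w w > 0`.
Then `φ w ≠ 0`, and every `v` can be moved along `w` into `ker φ`, up to scaling:
`u = φ w • v - φ v • w`. The inequality `B u u ≤ 0`, multiplied by `B w w` and completed to a
square, is the reverse Cauchy–Schwarz inequality for `v` and `w`. Conversely, reverse
Cauchy–Schwarz against a single `w` with `B w w > 0` makes `B` nonpositive on the orthogonal
complement of `w`, and if there is no such `w` then `B` is nonpositive everywhere. -/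

section BilinForm

open LinearMap (BilinForm)

variable {R V : Type*} [CommRing R] [LinearOrder R] [AddCommGroup V] [Module R V]

/-- The reverse Cauchy–Schwarz inequality for a bilinear form. It is required only against vectors
`w` of positive square, as (Hyp) does for matrices. -/
def ReverseCauchySchwarz (B : BilinForm R V) : Prop :=
  ∀ v w, 0 < B w w → B v v * B w w ≤ B v w ^ 2

/-- The bilinear form `B` is negative semidefinite on the kernel of the functional `φ`. For
`φ = B.flip g` this kernel is the orthogonal complement of `g`, and (NDC) is the existence of
such a `g`. -/
def NonposOnKer (B : BilinForm R V) (φ : Module.Dual R V) : Prop :=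
  ∀ v, φ v = 0 → B v v ≤ 0

variable {B : BilinForm R V} {φ : Module.Dual R V} {w : V}

theorem NonposOnKer.apply_ne_zero (hφ : NonposOnKer B φ) (hw : 0 < B w w) : φ w ≠ 0 :=
  fun h ↦ (hφ w h).not_gt hw

variable [IsStrictOrderedRing R]

theorem ReverseCauchySchwarz.nonposOnKer_flip (hB : ReverseCauchySchwarz B) (hw : 0 < B w w) :
    NonposOnKer B (B.flip w) := by
  intro v hv
  rw [LinearMap.BilinForm.flip_apply] at hv
  have hmul : B v v * B w w ≤ 0 := by simpa [hv] using hB v w hw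
  exact nonpos_of_mul_nonpos_left hmul hw

theorem NonposOnKer.reverseCauchySchwarz (hφ : NonposOnKer B φ) (hB : B.IsSymm) :
    ReverseCauchySchwarz B := by
  intro v w hw
  let u := φ w • v - φ v • w
  have hu_ker : φ u = 0 := by simp [u, mul_comm]
  have hu_apply : B u u = φ w ^ 2 * B v v - 2 * φ w * φ v * B v w + φ v ^ 2 * B w w := by
    simp only [u, map_sub, map_smul, LinearMap.sub_apply, LinearMap.smul_apply, smul_eq_mul,
      hB.eq w v]
    ring
  have hu_mul : B u u * B w w ≤ 0 := mul_nonpos_of_nonpos_of_nonneg (hφ u hu_ker) hw.le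
  have hφw : 0 < φ w ^ 2 := sq_pos_of_ne_zero (hφ.apply_ne_zero hw)
  refine le_of_mul_le_mul_left ?_ hφw
  calc φ w ^ 2 * (B v v * B w w)
      = φ w ^ 2 * B v w ^ 2 + B u u * B w w - (φ w * B v w - φ v * B w w) ^ 2 := by
        rw [hu_apply]
        ring
    _ ≤ φ w ^ 2 * B v w ^ 2 := by linarith [sq_nonneg (φ w * B v w - φ v * B w w)]

theorem stmt_1_general (hB : B.IsSymm) :
    ReverseCauchySchwarz B ↔ ∃ g, NonposOnKer B (B.flip g) := by
  constructor
  · intro h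
    by_cases hpos : ∃ w, 0 < B w w
    · obtain ⟨w, hw⟩ := hpos
      exact ⟨w, h.nonposOnKer_flip hw⟩
    · push Not at hpos
      exact ⟨0, fun v _ ↦ hpos v⟩
  · rintro ⟨g, hg⟩
    exact hg.reverseCauchySchwarz hB

end BilinForm

section Matrix

variable {r : ℕ} {M : Matrix (Fin r) (Fin r) ℝ}

theorem reverseCauchySchwarz_toBilin'_iff_satisfiesHyp :
    ReverseCauchySchwarz M.toBilin' ↔ SatisfiesHyp M := by
  simp only [ReverseCauchySchwarz, SatisfiesHyp, toBilin'_apply', ge_iff_le]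

theorem exists_nonposOnKer_toBilin'_iff_satisfiesNDC :
    (∃ g, NonposOnKer M.toBilin' (M.toBilin'.flip g)) ↔ SatisfiesNDC M := by
  simp only [NonposOnKer, SatisfiesNDC, LinearMap.BilinForm.flip_apply, toBilin'_apply']

end Matrix

theorem stmt_1 {r : ℕ} (hr : 1 ≤ r) (M : Matrix (Fin r) (Fin r) ℝ) (hM : M.IsSymm) :
    SatisfiesHyp M ↔ SatisfiesNDC M := by
  rw [← reverseCauchySchwarz_toBilin'_iff_satisfiesHyp,
    ← exists_nonposOnKer_toBilin'_iff_satisfiesNDC]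
  exact stmt_1_general (isSymm_toBilin'_iff_isSymm.2 hM)
end

section
/- (Ultra-log-concavity for matroids / strong Mason conjecture.) Let M be a matroid on a finite ground set X with |X| = n, and let k be an integer with 1 ≤ k < rk(M). Then I(k)² ≥ (1 + 1/k) · (1 + 1/(n−k)) · I(k−1) · I(k+1). -/
/-- The number of independent sets of cardinality `k` in the matroid `M`. -/
noncomputable def numIndep {α : Type*} (M : Matroid α) (k : ℕ) : ℕ :=
  {S : Set α | M.Indep S ∧ S.ncard = k}.ncard

/-- The rank of the matroid `M`: the maximal size of an independent set. -/
noncomputable def matroidRk {α : Type*} (M : Matroid α) : ℕ :=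
  sSup {n : ℕ | ∃ S : Set α, M.Indep S ∧ S.ncard = n}

/-!
Let `f = ∑ εʲ x₀ʲ ∏ a ∈ S, xₐ` be the sum over the independent sets `S` of `M`, homogenized to
degree `n` by `j = n - |S|`. As for the Lorentzian polynomials of Brändén–Huh and Anari–Liu–Oveis
Gharan–Vinzant, the Hessian of every derivative `∂ᵐ f` satisfies the reverse Cauchy–Schwarz
inequality at `(1, …, 1)`. When `∂ᵐ f` is quadratic, this is a Turán-type inequality for the
parallel classes of a contraction of `M`. In higher degrees, Euler's identity writes the Hessian
of `∂ᵐ f` as an average of the Hessians of the `∂ₖ ∂ᵐ f`, whose reverse Cauchy–Schwarz inequalities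
then bound its spectrum. Applied to the derivatives in `x₀` alone, the inequality becomes Mason's
in the limit `ε → 0`, where only the lowest powers of `ε` survive.
-/

section HyperbolicMatrices

open Matrix

variable {ι : Type*} [Fintype ι] {A : Matrix ι ι ℝ}

/-- The reverse Cauchy–Schwarz inequality at the vector `p` for the bilinear form of `A`. For a
symmetric `A` with `pᵀ A p > 0` it says that `A` has exactly one positive eigenvalue. -/
def IsHyperbolicAt (A : Matrix ι ι ℝ) (p : ι → ℝ) : Prop :=
  ∀ v, (v ⬝ᵥ A *ᵥ v) * (p ⬝ᵥ A *ᵥ p) ≤ (v ⬝ᵥ A *ᵥ p) ^ 2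

theorem dotProduct_mulVec_swap (hA : A.IsSymm) (u v : ι → ℝ) : u ⬝ᵥ A *ᵥ v = v ⬝ᵥ A *ᵥ u := by
  rw [← dotProduct_transpose_mulVec, hA.eq]

theorem isHyperbolicAt_of_nonpos_of_orthogonal (hA : A.IsSymm) {p : ι → ℝ}
    (hp : 0 ≤ p ⬝ᵥ A *ᵥ p) (q : ι → ℝ) (hq : ∀ v, q ⬝ᵥ v = 0 → v ⬝ᵥ A *ᵥ v ≤ 0) :
    IsHyperbolicAt A p := by
  intro v
  by_cases hqp : q ⬝ᵥ p = 0
  · rw [(hq p hqp).antisymm hp, mul_zero]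
    exact sq_nonneg _
  · have hquad := hq ((q ⬝ᵥ p) • v - (q ⬝ᵥ v) • p) (by
      simp only [dotProduct_sub, dotProduct_smul, smul_eq_mul]
      ring)
    simp only [mulVec_sub, mulVec_smul, dotProduct_sub, sub_dotProduct, dotProduct_smul,
      smul_dotProduct, smul_eq_mul, dotProduct_mulVec_swap hA p v] at hquad
    have hpos : 0 < (q ⬝ᵥ p) ^ 2 := by positivity
    refine le_of_mul_le_mul_left ?_ hpos
    nlinarith [mul_nonpos_of_nonneg_of_nonpos hp hquad,
      sq_nonneg ((q ⬝ᵥ v) * (p ⬝ᵥ A *ᵥ p) - (q ⬝ᵥ p) * (v ⬝ᵥ A *ᵥ p))]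

theorem dotProduct_mulVec_nonpos_of_orthogonal_eigenvectors (hA : A.IsSymm) (x : ι → ℝ)
    (hx : ∀ μ : ℝ, 0 < μ → ∀ u, A *ᵥ u = μ • u → u ⬝ᵥ x = 0) : x ⬝ᵥ A *ᵥ x ≤ 0 := by
  classical
  have hHerm : A.IsHermitian := by
    rwa [IsHermitian, conjTranspose_eq_transpose_of_trivial]
  let b := hHerm.eigenvectorBasis
  have hb (k : ι) : A *ᵥ (b k).ofLp = hHerm.eigenvalues k • (b k).ofLp :=
    hHerm.mulVec_eigenvectorBasis k
  have hexpand : x ⬝ᵥ A *ᵥ x = ∑ k, hHerm.eigenvalues k * ((b k).ofLp ⬝ᵥ x) ^ 2 := by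
    have hparseval := b.sum_inner_mul_inner (WithLp.toLp 2 x) (WithLp.toLp 2 (A *ᵥ x))
    simp only [EuclideanSpace.inner_eq_star_dotProduct, star_trivial] at hparseval
    rw [dotProduct_comm, ← hparseval]
    refine Finset.sum_congr rfl fun k _ ↦ ?_
    rw [dotProduct_comm (A *ᵥ x), dotProduct_mulVec_swap hA, hb, dotProduct_smul, smul_eq_mul,
      dotProduct_comm x]
    ring
  rw [hexpand]
  refine Finset.sum_nonpos fun k _ ↦ ?_
  rcases lt_or_ge 0 (hHerm.eigenvalues k) with hpos | hnonpos
  · simp [hx _ hpos (b k).ofLp (hb k)]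
  · exact mul_nonpos_of_nonpos_of_nonneg hnonpos (sq_nonneg _)

theorem dotProduct_mulVec_nonpos_of_orthogonal_generalized_eigenvectors (hA : A.IsSymm)
    {d : ι → ℝ} (hd : ∀ i, 0 < d i) (x : ι → ℝ)
    (hx : ∀ μ : ℝ, 0 < μ → ∀ v, A *ᵥ v = μ • (d * v) → (d * v) ⬝ᵥ x = 0) : x ⬝ᵥ A *ᵥ x ≤ 0 := by
  set s : ι → ℝ := fun i ↦ √(d i)
  have hs (i : ι) : s i ≠ 0 := (Real.sqrt_pos.2 (hd i)).ne'
  have hss : s * s⁻¹ = 1 := funext fun i ↦ mul_inv_cancel₀ (hs i)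
  have hsd : d = s * s := funext fun i ↦ (Real.mul_self_sqrt (hd i).le).symm
  let B : Matrix ι ι ℝ := of fun i j ↦ s⁻¹ i * A i j * s⁻¹ j
  have hB : B.IsSymm := by
    ext i j
    simp only [B, transpose_apply, of_apply, hA.apply]
    ring
  have hB_mulVec (u : ι → ℝ) : B *ᵥ u = s⁻¹ * A *ᵥ (s⁻¹ * u) := by
    ext i
    simp only [B, mulVec, dotProduct, of_apply, Pi.mul_apply, Finset.mul_sum]
    exact Finset.sum_congr rfl fun j _ ↦ by ring
  have hmul_dotProduct (u v w : ι → ℝ) : (u * v) ⬝ᵥ w = v ⬝ᵥ (u * w) :=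
    Finset.sum_congr rfl fun i _ ↦ by simp only [Pi.mul_apply]; ring
  have hform : (s * x) ⬝ᵥ B *ᵥ (s * x) = x ⬝ᵥ A *ᵥ x := by
    rw [hB_mulVec, hmul_dotProduct, ← mul_assoc, ← mul_assoc, mul_comm s⁻¹, hss, one_mul, one_mul]
  rw [← hform]
  refine dotProduct_mulVec_nonpos_of_orthogonal_eigenvectors hB _ fun μ hμ u hu ↦ ?_
  have hdv : d * (s⁻¹ * u) = s * u := by
    rw [hsd, mul_assoc, ← mul_assoc s s⁻¹, hss, one_mul]
  rw [← hmul_dotProduct, ← hdv]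
  refine hx μ hμ _ ?_
  rw [hdv, ← mul_smul_comm, ← hu, hB_mulVec, ← mul_assoc, hss, one_mul]

theorem sum_mul_sub_sq (hA : A.IsSymm) (v : ι → ℝ) :
    ∑ i, ∑ j, A i j * (v i - v j) ^ 2 = 2 * ((A *ᵥ 1 * v) ⬝ᵥ v - v ⬝ᵥ A *ᵥ v) := by
  have hdiag : (A *ᵥ 1 * v) ⬝ᵥ v = ∑ i, ∑ j, A i j * v i ^ 2 := by
    refine Finset.sum_congr rfl fun i _ ↦ ?_
    rw [Pi.mul_apply, mulVec, dotProduct_one, ← Finset.sum_mul]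
    ring
  have hdiag' : (A *ᵥ 1 * v) ⬝ᵥ v = ∑ i, ∑ j, A i j * v j ^ 2 := by
    rw [hdiag, Finset.sum_comm]
    simp only [hA.apply]
  have hcross : v ⬝ᵥ A *ᵥ v = ∑ i, ∑ j, A i j * (v i * v j) := by
    refine Finset.sum_congr rfl fun i _ ↦ ?_
    rw [mulVec, dotProduct, Finset.mul_sum]
    exact Finset.sum_congr rfl fun j _ ↦ by ring
  calc ∑ i, ∑ j, A i j * (v i - v j) ^ 2
      = ∑ i, ∑ j, A i j * v i ^ 2 + ∑ i, ∑ j, A i j * v j ^ 2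
          - 2 * ∑ i, ∑ j, A i j * (v i * v j) := by
        simp only [Finset.mul_sum, ← Finset.sum_add_distrib, ← Finset.sum_sub_distrib]
        exact Finset.sum_congr rfl fun i _ ↦ Finset.sum_congr rfl fun j _ ↦ by ring
    _ = 2 * ((A *ᵥ 1 * v) ⬝ᵥ v - v ⬝ᵥ A *ᵥ v) := by
        rw [← hdiag, ← hdiag', ← hcross]
        ring

theorem eq_of_generalized_eigenvector (hA : A.IsSymm) (hA0 : ∀ i j, 0 ≤ A i j) {μ : ℝ} (hμ : 0 < μ)
    {v : ι → ℝ} (hv : A *ᵥ v = μ • (A *ᵥ 1 * v))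
    (hle : v ⬝ᵥ A *ᵥ v ≤ ∑ i, (A *ᵥ v) i ^ 2 / (A *ᵥ 1) i) {i j : ι} (hij : 0 < A i j) :
    v i = v j := by
  have hlhs : v ⬝ᵥ A *ᵥ v = μ * ((A *ᵥ 1 * v) ⬝ᵥ v) := by
    rw [hv, dotProduct_smul, smul_eq_mul, dotProduct_comm]
  have hrhs : ∑ i, (A *ᵥ v) i ^ 2 / (A *ᵥ 1) i = μ * (μ * ((A *ᵥ 1 * v) ⬝ᵥ v)) := by
    simp only [dotProduct, Finset.mul_sum, hv]
    refine Finset.sum_congr rfl fun i _ ↦ ?_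
    simp only [Pi.smul_apply, Pi.mul_apply, smul_eq_mul]
    rcases eq_or_ne ((A *ᵥ 1) i) 0 with hi | hi
    · simp [hi]
    · field_simp
  rw [hlhs, hrhs] at hle
  have hterm (i j : ι) : 0 ≤ A i j * (v i - v j) ^ 2 := mul_nonneg (hA0 i j) (sq_nonneg _)
  have hsum : ∑ i, ∑ j, A i j * (v i - v j) ^ 2 = 0 := by
    refine le_antisymm ?_ (Finset.sum_nonneg fun i _ ↦ Finset.sum_nonneg fun j _ ↦ hterm i j)
    rw [sum_mul_sub_sq hA, hlhs]
    linarith [le_of_mul_le_mul_left hle hμ]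
  have hrow := congrFun ((Fintype.sum_eq_zero_iff_of_nonneg
    fun i ↦ Finset.sum_nonneg fun j _ ↦ hterm i j).1 hsum) i
  have hentry := congrFun ((Fintype.sum_eq_zero_iff_of_nonneg (hterm i)).1 hrow) j
  exact sub_eq_zero.1 (pow_eq_zero_iff two_ne_zero |>.1
    ((mul_eq_zero.1 hentry).resolve_left hij.ne'))

theorem mulVec_one_nonneg (hA0 : ∀ i j, 0 ≤ A i j) (i : ι) : 0 ≤ (A *ᵥ 1) i := by
  rw [mulVec, dotProduct_one]
  exact Finset.sum_nonneg fun j _ ↦ hA0 i j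

theorem row_eq_zero_of_mulVec_one_eq_zero (hA0 : ∀ i j, 0 ≤ A i j) {i : ι} (hi : (A *ᵥ 1) i = 0) :
    A i = 0 := by
  rw [mulVec, dotProduct_one] at hi
  exact (Fintype.sum_eq_zero_iff_of_nonneg (hA0 i)).1 hi

/-- In the coordinates where the row sums of `A` form the diagonal matrix `D`, the assumption `hle`
says that the eigenvalues of `D⁻¹ A` lie outside `(0, 1)`. As `D⁻¹ A` is a random walk, its
eigenvalues are at most `1`, with only the constants in the eigenspace of `1` by connectedness
through `w`. -/
theorem isHyperbolicAt_one_of_le_sum_sq_div (hA : A.IsSymm) (hA0 : ∀ i j, 0 ≤ A i j) (w : ι)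
    (hw : ∀ i j, 0 < A i j → 0 < A w i)
    (hle : ∀ v, v ⬝ᵥ A *ᵥ v ≤ ∑ i, (A *ᵥ v) i ^ 2 / (A *ᵥ 1) i) : IsHyperbolicAt A 1 := by
  set q := A *ᵥ 1 with hq
  have hq0 : ∀ i, 0 ≤ q i := mulVec_one_nonneg hA0
  have hrow {i : ι} (hi : q i = 0) : A i = 0 := row_eq_zero_of_mulVec_one_eq_zero hA0 hi
  have hp : 0 ≤ (1 : ι → ℝ) ⬝ᵥ q := dotProduct_nonneg_of_nonneg zero_le_one hq0
  refine isHyperbolicAt_of_nonpos_of_orthogonal hA hp q fun x hx ↦ ?_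
  let d : ι → ℝ := fun i ↦ if q i = 0 then 1 else q i
  have hd (i : ι) : 0 < d i := by
    by_cases hi : q i = 0
    · simp [d, hi]
    · simpa [d, hi] using (hq0 i).lt_of_ne' hi
  refine dotProduct_mulVec_nonpos_of_orthogonal_generalized_eigenvectors hA hd x fun μ hμ v hv ↦ ?_
  have hdv : d * v = q * v := by
    ext i
    by_cases hi : q i = 0
    · have hvi : 0 = μ * v i := by simpa [d, hi, mulVec, hrow hi] using congrFun hv i
      simp [hi, (mul_eq_zero.1 hvi.symm).resolve_left hμ.ne']
    · simp [d, hi]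
  have hconst : q * v = v w • q := by
    ext i
    by_cases hi : q i = 0
    · simp [hi]
    · obtain ⟨j, hj⟩ := Function.ne_iff.1 fun h : A i = 0 ↦ hi (by simp [hq, mulVec, h])
      have hwi := hw i j ((hA0 i j).lt_of_ne' hj)
      rw [hdv] at hv
      simp [eq_of_generalized_eigenvector hA hA0 hμ hv (hle v) hwi, mul_comm]
  rw [hdv, hconst, smul_dotProduct, hx, smul_zero]

theorem dotProduct_mulVec_option {α : Type*} [Fintype α] {A : Matrix (Option α) (Option α) ℝ}
    (hA : A.IsSymm) (v : Option α → ℝ) :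
    v ⬝ᵥ A *ᵥ v = A none none * v none ^ 2 + 2 * v none * ∑ a, A none (some a) * v (some a) +
      ∑ a, ∑ b, A (some a) (some b) * (v (some a) * v (some b)) := by
  have hcol : ∑ a, v (some a) * (A (some a) none * v none) =
      v none * ∑ a, A none (some a) * v (some a) := by
    rw [Finset.mul_sum]
    exact Finset.sum_congr rfl fun a _ ↦ by rw [hA.apply]; ring
  have hblock : ∑ a, v (some a) * ∑ b, A (some a) (some b) * v (some b) =
      ∑ a, ∑ b, A (some a) (some b) * (v (some a) * v (some b)) := by
    simp only [Finset.mul_sum]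
    exact Finset.sum_congr rfl fun a _ ↦ Finset.sum_congr rfl fun b _ ↦ by ring
  simp only [dotProduct, mulVec, Fintype.sum_option, mul_add (v (some _)), Finset.sum_add_distrib,
    hcol, hblock]
  ring

end HyperbolicMatrices

section HomogeneousPolynomials

open Matrix

variable {ι : Type*} [Fintype ι] [DecidableEq ι] {n : ℕ}

/-- The value `∂ᵐ f (1, …, 1)` for the homogeneous polynomial `f = ∑ₑ a e • xᵉ` of degree `n`. A
multiset of variables stands for the exponent vector of its multiplicities, so that
`a : Sym ι n → ℝ` lists the coefficients of `f`, and `m` lists the variables by which one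
differentiates. -/
noncomputable def iterDerivAtOne (a : Sym ι n → ℝ) (m : Multiset ι) : ℝ :=
  ∑ e : Sym ι n, a e * ∏ i, ((e : Multiset ι).count i).descFactorial (m.count i)

/-- The Hessian matrix of `∂ᵐ f` at `(1, …, 1)`, for `f` as in `iterDerivAtOne`. -/
noncomputable def hessianAtOne (a : Sym ι n → ℝ) (m : Multiset ι) : Matrix ι ι ℝ :=
  of fun i j ↦ iterDerivAtOne a (i ::ₘ j ::ₘ m)

theorem prod_descFactorial_count_eq_zero_iff {e m : Multiset ι} :
    ∏ i, (e.count i).descFactorial (m.count i) = 0 ↔ ¬ m ≤ e := by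
  simp [Finset.prod_eq_zero_iff, Multiset.le_iff_count]

theorem prod_descFactorial_count_cons (e m : Multiset ι) (i : ι) :
    ∏ k, (e.count k).descFactorial ((i ::ₘ m).count k) =
      (e.count i - m.count i) * ∏ k, (e.count k).descFactorial (m.count k) := by
  rw [← Finset.mul_prod_erase _ _ (Finset.mem_univ i), ← Finset.mul_prod_erase _ (fun k ↦
    (e.count k).descFactorial (m.count k)) (Finset.mem_univ i), Multiset.count_cons_self,
    Nat.descFactorial_succ, mul_assoc]
  congr 2
  refine Finset.prod_congr rfl fun k hk ↦ ?_
  rw [Multiset.count_cons_of_ne (Finset.ne_of_mem_erase hk)]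

theorem sum_prod_descFactorial_count_cons (e m : Multiset ι) :
    ∑ i, ∏ k, (e.count k).descFactorial ((i ::ₘ m).count k) =
      (e.card - m.card) * ∏ k, (e.count k).descFactorial (m.count k) := by
  simp only [prod_descFactorial_count_cons, ← Finset.sum_mul]
  by_cases hme : m ≤ e
  · rw [Finset.sum_tsub_distrib _ fun i _ ↦ Multiset.count_le_of_le i hme,
      Multiset.sum_count_eq_card fun i _ ↦ Finset.mem_univ i,
      Multiset.sum_count_eq_card fun i _ ↦ Finset.mem_univ i]
  · rw [prod_descFactorial_count_eq_zero_iff.2 hme, mul_zero, mul_zero]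

/-- Euler's identity for `∂ᵐ f`, which is homogeneous of degree `d`. -/
theorem sum_iterDerivAtOne_cons (a : Sym ι n → ℝ) {m : Multiset ι} {d : ℕ} (hd : m.card + d = n) :
    ∑ i, iterDerivAtOne a (i ::ₘ m) = d * iterDerivAtOne a m := by
  unfold iterDerivAtOne
  rw [Finset.sum_comm, Finset.mul_sum]
  refine Finset.sum_congr rfl fun e _ ↦ ?_
  rw [← Finset.mul_sum, mul_left_comm]
  have hcard : (e : Multiset ι).card - m.card = d := by
    rw [Sym.card_coe]
    omega
  exact_mod_cast congrArg (fun k : ℕ ↦ a e * k)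
    (hcard ▸ sum_prod_descFactorial_count_cons (e : Multiset ι) m)

theorem iterDerivAtOne_nonneg {a : Sym ι n → ℝ} (ha : 0 ≤ a) (m : Multiset ι) :
    0 ≤ iterDerivAtOne a m :=
  Finset.sum_nonneg fun e _ ↦ mul_nonneg (ha e) (Nat.cast_nonneg _)

theorem iterDerivAtOne_pos_iff {a : Sym ι n → ℝ} (ha : 0 ≤ a) {m : Multiset ι} :
    0 < iterDerivAtOne a m ↔ ∃ e : Sym ι n, 0 < a e ∧ m ≤ e := by
  unfold iterDerivAtOne
  rw [Finset.sum_pos_iff_of_nonneg fun e _ ↦ mul_nonneg (ha e) (Nat.cast_nonneg _)]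
  simp only [Finset.mem_univ, true_and]
  refine exists_congr fun e ↦ ?_
  have hae : 0 ≤ a e := ha e
  rw [hae.lt_iff_ne', (mul_nonneg hae (Nat.cast_nonneg _)).lt_iff_ne', mul_ne_zero_iff,
    Nat.cast_ne_zero, Ne, Ne, prod_descFactorial_count_eq_zero_iff, not_not]

theorem iterDerivAtOne_of_card_eq (a : Sym ι n → ℝ) {m : Multiset ι} (hm : m.card = n) :
    iterDerivAtOne a m = a (Sym.mk m hm) * ∏ i, (m.count i).factorial := by
  unfold iterDerivAtOne
  rw [Finset.sum_eq_single (Sym.mk m hm)]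
  · simp [Nat.descFactorial_self]
  · intro e _ hne
    have hme : ¬ m ≤ e := fun hle ↦
      hne (Subtype.ext (Multiset.eq_of_le_of_card_le hle (by simp [hm])).symm)
    rw [prod_descFactorial_count_eq_zero_iff.2 hme, Nat.cast_zero, mul_zero]
  · simp

theorem isSymm_hessianAtOne (a : Sym ι n → ℝ) (m : Multiset ι) : (hessianAtOne a m).IsSymm := by
  ext i j
  simp only [hessianAtOne, transpose_apply, of_apply, Multiset.cons_swap]

theorem hessianAtOne_cons (a : Sym ι n → ℝ) (m : Multiset ι) (i j k : ι) :
    hessianAtOne a (k ::ₘ m) i j = iterDerivAtOne a (k ::ₘ i ::ₘ j ::ₘ m) := by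
  rw [hessianAtOne, of_apply, Multiset.cons_swap j k, Multiset.cons_swap i k]

theorem hessianAtOne_mulVec_one (a : Sym ι n → ℝ) {m : Multiset ι} {d : ℕ}
    (hd : m.card + 1 + d = n) :
    hessianAtOne a m *ᵥ 1 = (d : ℝ) • fun i ↦ iterDerivAtOne a (i ::ₘ m) := by
  ext i
  rw [mulVec, dotProduct_one, Pi.smul_apply, smul_eq_mul,
    ← sum_iterDerivAtOne_cons a (m := i ::ₘ m) (by rwa [Multiset.card_cons])]
  simp only [hessianAtOne, of_apply, Multiset.cons_swap i]

theorem hessianAtOne_cons_mulVec_one (a : Sym ι n → ℝ) {m : Multiset ι} {d : ℕ}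
    (hd : m.card + 2 + d = n) (k : ι) :
    hessianAtOne a (k ::ₘ m) *ᵥ 1 = (d : ℝ) • hessianAtOne a m k := by
  rw [hessianAtOne_mulVec_one a (by rwa [Multiset.card_cons])]
  ext i
  rw [Pi.smul_apply, Pi.smul_apply, ← (isSymm_hessianAtOne a m).apply]
  rfl

theorem sum_hessianAtOne_cons (a : Sym ι n → ℝ) {m : Multiset ι} {d : ℕ}
    (hd : m.card + 2 + d = n) :
    ∑ k, hessianAtOne a (k ::ₘ m) = (d : ℝ) • hessianAtOne a m := by
  ext i j
  rw [Matrix.sum_apply]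
  simp only [hessianAtOne_cons]
  exact sum_iterDerivAtOne_cons a (by simpa [add_assoc] using hd)

theorem hessianAtOne_nonneg {a : Sym ι n → ℝ} (ha : 0 ≤ a) (m : Multiset ι) (i j : ι) :
    0 ≤ hessianAtOne a m i j :=
  iterDerivAtOne_nonneg ha _

theorem hessianAtOne_cons_eq_zero {a : Sym ι n → ℝ} (ha : 0 ≤ a) {m : Multiset ι} {d : ℕ}
    (hd : m.card + 2 + d = n) {k : ι} (hk : (hessianAtOne a m *ᵥ 1) k = 0) :
    hessianAtOne a (k ::ₘ m) = 0 := by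
  have hrow := row_eq_zero_of_mulVec_one_eq_zero (hessianAtOne_nonneg ha m) hk
  have hsum := hessianAtOne_cons_mulVec_one a hd k
  rw [hrow, smul_zero] at hsum
  exact funext fun i ↦
    row_eq_zero_of_mulVec_one_eq_zero (hessianAtOne_nonneg ha _) (congrFun hsum i)

theorem dotProduct_hessianAtOne_le_sum_sq_div {a : Sym ι n → ℝ} (ha : 0 ≤ a) {m : Multiset ι}
    {d : ℕ} (hd : m.card + 2 + (d + 1) = n)
    (hm : ∀ k, IsHyperbolicAt (hessianAtOne a (k ::ₘ m)) 1) (v : ι → ℝ) :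
    v ⬝ᵥ hessianAtOne a m *ᵥ v ≤
      ∑ k, (hessianAtOne a m *ᵥ v) k ^ 2 / (hessianAtOne a m *ᵥ 1) k := by
  set N : ℝ := ((d + 1 : ℕ) : ℝ)
  have hN0 : 0 < N := Nat.cast_pos.2 d.succ_pos
  have hvec (k : ι) (u : ι → ℝ) :
      u ⬝ᵥ hessianAtOne a (k ::ₘ m) *ᵥ 1 = N * (hessianAtOne a m *ᵥ u) k := by
    rw [hessianAtOne_cons_mulVec_one a hd, dotProduct_smul, smul_eq_mul, dotProduct_comm]
    rfl
  have hterm (k : ι) : v ⬝ᵥ hessianAtOne a (k ::ₘ m) *ᵥ v ≤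
      N * ((hessianAtOne a m *ᵥ v) k ^ 2 / (hessianAtOne a m *ᵥ 1) k) := by
    have hk := hm k v
    rw [hvec, hvec] at hk
    rcases (mulVec_one_nonneg (hessianAtOne_nonneg ha m) k).eq_or_lt with hzero | hpos
    · simp [hessianAtOne_cons_eq_zero ha hd hzero.symm, ← hzero]
    · rw [← mul_div_assoc, le_div_iff₀ hpos]
      refine le_of_mul_le_mul_left ?_ hN0
      linarith
  refine le_of_mul_le_mul_left ?_ hN0
  calc N * (v ⬝ᵥ hessianAtOne a m *ᵥ v)
      = ∑ k, v ⬝ᵥ hessianAtOne a (k ::ₘ m) *ᵥ v := by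
        rw [← dotProduct_sum, ← sum_mulVec, sum_hessianAtOne_cons a hd, smul_mulVec,
          dotProduct_smul, smul_eq_mul]
    _ ≤ ∑ k, N * ((hessianAtOne a m *ᵥ v) k ^ 2 / (hessianAtOne a m *ᵥ 1) k) :=
        Finset.sum_le_sum fun k _ ↦ hterm k
    _ = N * ∑ k, (hessianAtOne a m *ᵥ v) k ^ 2 / (hessianAtOne a m *ᵥ 1) k :=
        (Finset.mul_sum ..).symm

theorem isHyperbolicAt_hessianAtOne {a : Sym ι n → ℝ} (ha : 0 ≤ a) (w : ι)
    (hw : ∀ m i, m.card < n → 0 < iterDerivAtOne a (i ::ₘ m) → 0 < iterDerivAtOne a (w ::ₘ m))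
    (hquad : ∀ m : Multiset ι, m.card + 2 = n → IsHyperbolicAt (hessianAtOne a m) 1)
    {m : Multiset ι} {d : ℕ} (hd : m.card + 2 + d = n) : IsHyperbolicAt (hessianAtOne a m) 1 := by
  induction d generalizing m with
  | zero => exact hquad m hd
  | succ d ih =>
    refine isHyperbolicAt_one_of_le_sum_sq_div (isSymm_hessianAtOne a m)
      (hessianAtOne_nonneg ha m) w (fun i j hij ↦ ?_) ?_
    · rw [← (isSymm_hessianAtOne a m).apply] at hij
      exact hw (i ::ₘ m) j (by rw [Multiset.card_cons]; omega) hij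
    · exact dotProduct_hessianAtOne_le_sum_sq_div ha hd fun k ↦
        ih (by rw [Multiset.card_cons]; omega)

/-- Hyperbolicity of the Hessian of `∂ᵐ f`, tested on the basis vector of the variable `i`. -/
theorem iterDerivAtOne_mul_le_sq (a : Sym ι n → ℝ) {m : Multiset ι} {d : ℕ}
    (hd : m.card + 2 + d = n) (hm : IsHyperbolicAt (hessianAtOne a m) 1) (i : ι) :
    (d + 2) * (iterDerivAtOne a (i ::ₘ i ::ₘ m) * iterDerivAtOne a m) ≤
      (d + 1) * iterDerivAtOne a (i ::ₘ m) ^ 2 := by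
  have hone := hessianAtOne_mulVec_one a (m := m) (d := d + 1) (by omega)
  have hsum := sum_iterDerivAtOne_cons a (m := m) (d := d + 2) (by omega)
  have hi := hm (Pi.single i 1)
  rw [hone, dotProduct_smul, dotProduct_smul, one_dotProduct, hsum, single_one_dotProduct,
    single_one_dotProduct, mulVec_single_one] at hi
  simp only [smul_eq_mul, hessianAtOne, col_apply, of_apply] at hi
  push_cast at hi
  refine le_of_mul_le_mul_left ?_ (by positivity : (0 : ℝ) < d + 1)
  linarith

end HomogeneousPolynomials

section ParallelClasses

/-- Cauchy–Schwarz over the fibres of `φ`, as in the Motzkin–Straus proof of Turán's theorem. -/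
theorem mul_sum_ne_le_mul_sum_sq {β γ : Type*} [DecidableEq γ] (L : Finset β) (φ : β → γ)
    (f : β → ℝ) {N : ℕ} (hN : L.card ≤ N) :
    N * ∑ a ∈ L, ∑ b ∈ L, (if φ a ≠ φ b then f a * f b else 0) ≤ (N - 1) * (∑ a ∈ L, f a) ^ 2 := by
  have hfibres : ∑ a ∈ L, ∑ b ∈ L, (if φ a = φ b then f a * f b else 0) =
      ∑ c ∈ L.image φ, (∑ a ∈ L with φ a = c, f a) ^ 2 := by
    refine (Finset.sum_image' _ fun a _ ↦ ?_).symm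
    rw [sq, Finset.sum_mul]
    refine Finset.sum_congr rfl fun b hb ↦ ?_
    rw [Finset.mul_sum, Finset.sum_filter, (Finset.mem_filter.1 hb).2]
    exact Finset.sum_congr rfl fun c _ ↦ by simp only [eq_comm]
  have hcompl : ∑ a ∈ L, ∑ b ∈ L, (if φ a ≠ φ b then f a * f b else 0) =
      (∑ a ∈ L, f a) ^ 2 - ∑ c ∈ L.image φ, (∑ a ∈ L with φ a = c, f a) ^ 2 := by
    rw [← hfibres, sq, Finset.sum_mul_sum, eq_sub_iff_add_eq]
    simp only [← Finset.sum_add_distrib]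
    refine Finset.sum_congr rfl fun a _ ↦ Finset.sum_congr rfl fun b _ ↦ ?_
    by_cases hab : φ a = φ b <;> simp [hab]
  have hcauchy : (∑ a ∈ L, f a) ^ 2 ≤ N * ∑ c ∈ L.image φ, (∑ a ∈ L with φ a = c, f a) ^ 2 := by
    rw [← Finset.sum_fiberwise_of_maps_to fun a ha ↦ Finset.mem_image_of_mem φ ha]
    refine sq_sum_le_card_mul_sum_sq.trans ?_
    gcongr
    exact Finset.card_image_le.trans hN
  rw [hcompl]
  linarith

/-- The flat `M.closure (insert a S)` stands for the parallel class of `a` in the contraction of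
`M` by `S`. -/
theorem indep_insert_insert_iff_closure_ne {α : Type*} {M : Matroid α} {S : Set α} {a b : α}
    (ha : a ∉ S) (hb : b ∉ S) :
    a ≠ b ∧ M.Indep (insert a (insert b S)) ↔ M.Indep (insert a S) ∧ M.Indep (insert b S) ∧
      M.closure (insert a S) ≠ M.closure (insert b S) := by
  constructor
  · rintro ⟨hab, hI⟩
    have haS : M.Indep (insert a S) := hI.subset (Set.insert_subset_insert (Set.subset_insert b S))
    have hbS : M.Indep (insert b S) := hI.subset (Set.subset_insert a _)
    refine ⟨haS, hbS, fun heq ↦ ?_⟩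
    have haE := (hbS.insert_indep_iff_of_notMem (by simp [hab, ha])).1 hI
    exact haE.2 (heq ▸ M.mem_closure_of_mem (Set.mem_insert a S) haS.subset_ground)
  · rintro ⟨haS, hbS, hne⟩
    have hab : a ≠ b := by
      rintro rfl
      exact hne rfl
    have hS : M.Indep S := haS.subset (Set.subset_insert a S)
    have haE := (hS.insert_indep_iff_of_notMem ha).1 haS
    refine ⟨hab, (hbS.insert_indep_iff_of_notMem (by simp [hab, ha])).2 ⟨haE.1, fun hmem ↦ ?_⟩⟩
    exact hne (M.closure_insert_congr ⟨hmem, haE.2⟩)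

end ParallelClasses

section IndepMonomials

variable {α : Type*} {M : Matroid α} {m : Multiset (Option α)}

/-- The set of elements `a` whose variable `some a` divides the monomial `m`. -/
def groundSupport (m : Multiset (Option α)) : Set α := {a | some a ∈ m}

theorem groundSupport_cons_none (m : Multiset (Option α)) :
    groundSupport (none ::ₘ m) = groundSupport m := by
  simp [groundSupport]

theorem groundSupport_cons_some (a : α) (m : Multiset (Option α)) :
    groundSupport (some a ::ₘ m) = insert a (groundSupport m) := by
  ext b
  simp [groundSupport]

theorem groundSupport_replicate_none_add (j : ℕ) (m : Multiset (Option α)) :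
    groundSupport (Multiset.replicate j none + m) = groundSupport m := by
  simp [groundSupport, Multiset.mem_replicate]

theorem groundSupport_map_some (S : Finset α) : groundSupport (S.val.map some) = S := by
  simp [groundSupport]

variable [DecidableEq α]

/-- The monomials `x₀ʲ ∏ a ∈ S, xₐ` with `S` independent, where `none` stands for the homogenizing
variable `x₀` and `some a` for `xₐ`. -/
def IsIndepMonomial (M : Matroid α) (m : Multiset (Option α)) : Prop :=
  (∀ a, m.count (some a) ≤ 1) ∧ M.Indep (groundSupport m)

theorem IsIndepMonomial.of_le {m' : Multiset (Option α)} (hm : IsIndepMonomial M m) (h : m' ≤ m) :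
    IsIndepMonomial M m' :=
  ⟨fun a ↦ (Multiset.count_le_of_le _ h).trans (hm.1 a),
    hm.2.subset fun _ ha ↦ Multiset.mem_of_le h ha⟩

theorem isIndepMonomial_cons_none : IsIndepMonomial M (none ::ₘ m) ↔ IsIndepMonomial M m := by
  simp [IsIndepMonomial, groundSupport_cons_none]

theorem IsIndepMonomial.cons_some_iff (hm : IsIndepMonomial M m) {a : α} :
    IsIndepMonomial M (some a ::ₘ m) ↔
      a ∉ groundSupport m ∧ M.Indep (insert a (groundSupport m)) := by
  rw [IsIndepMonomial, groundSupport_cons_some]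
  refine and_congr_left fun _ ↦ ⟨fun h ha ↦ ?_, fun ha b ↦ ?_⟩
  · have hcount := h a
    rw [Multiset.count_cons_self] at hcount
    have hpos := Multiset.count_pos.2 ha
    omega
  · rcases eq_or_ne b a with rfl | hne
    · rw [Multiset.count_cons_self, Multiset.count_eq_zero_of_notMem ha]
    · rw [Multiset.count_cons_of_ne (by simpa using hne)]
      exact hm.1 b

theorem isIndepMonomial_cons_some_cons_some_iff {a b : α} :
    IsIndepMonomial M (some a ::ₘ some b ::ₘ m) ↔
      IsIndepMonomial M (some a ::ₘ m) ∧ IsIndepMonomial M (some b ::ₘ m) ∧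
        M.closure (insert a (groundSupport m)) ≠ M.closure (insert b (groundSupport m)) := by
  by_cases hmb : IsIndepMonomial M (some b ::ₘ m)
  · have hm : IsIndepMonomial M m := hmb.of_le (Multiset.le_cons_self m _)
    have hb := hm.cons_some_iff.1 hmb
    rw [hmb.cons_some_iff, hm.cons_some_iff, groundSupport_cons_some, Set.mem_insert_iff]
    have hiff (ha : a ∉ groundSupport m) := indep_insert_insert_iff_closure_ne (M := M) ha hb.1
    tauto
  · exact iff_of_false (fun h ↦ hmb (h.of_le (Multiset.le_cons_self _ _))) fun h ↦ hmb h.2.1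

theorem isIndepMonomial_replicate_none_add (j : ℕ) :
    IsIndepMonomial M (Multiset.replicate j none + m) ↔ IsIndepMonomial M m := by
  induction j with
  | zero => simp
  | succ j ih => rw [Multiset.replicate_succ, Multiset.cons_add, isIndepMonomial_cons_none, ih]

theorem IsIndepMonomial.count_some (hm : IsIndepMonomial M m) (a : α) [Decidable (some a ∈ m)] :
    m.count (some a) = if some a ∈ m then 1 else 0 := by
  split_ifs with ha
  · exact (hm.1 a).antisymm (Multiset.one_le_count_iff_mem.2 ha)
  · exact Multiset.count_eq_zero_of_notMem ha

theorem IsIndepMonomial.count_none_add_ncard [Finite α] (hm : IsIndepMonomial M m) :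
    m.count none + (groundSupport m).ncard = m.card := by
  have := Fintype.ofFinite α
  rw [← Multiset.sum_count_eq_card (s := Finset.univ) fun i _ ↦ Finset.mem_univ i,
    Fintype.sum_option]
  simp only [hm.count_some, Finset.sum_boole, Nat.cast_id]
  rw [← Set.ncard_coe_finset, Finset.coe_filter_univ]
  rfl

theorem IsIndepMonomial.eq_of_groundSupport_eq [Finite α] {m' : Multiset (Option α)}
    (hm : IsIndepMonomial M m) (hm' : IsIndepMonomial M m') (hcard : m.card = m'.card)
    (h : groundSupport m = groundSupport m') : m = m' := by
  ext (_ | a)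
  · have hcount := hm.count_none_add_ncard
    have hcount' := hm'.count_none_add_ncard
    rw [h] at hcount
    omega
  · have ha : some a ∈ m ↔ some a ∈ m' := Set.ext_iff.1 h a
    simp only [hm.count_some, hm'.count_some, ha]

theorem exists_isIndepMonomial_groundSupport_eq [Finite α] {S : Set α} (hS : M.Indep S) {n : ℕ}
    (hn : S.ncard ≤ n) :
    ∃ e : Sym (Option α) n, IsIndepMonomial M e ∧ groundSupport (e : Multiset (Option α)) = S := by
  lift S to Finset α using S.toFinite
  rw [Set.ncard_coe_finset] at hn
  refine ⟨Sym.mk (Multiset.replicate (n - S.card) none + S.val.map some) (by simp [hn]), ?_, ?_⟩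
  · rw [Sym.coe_mk, isIndepMonomial_replicate_none_add]
    refine ⟨fun a ↦ Multiset.nodup_iff_count_le_one.1
      (S.nodup.map (Option.some_injective α)) _, ?_⟩
    rwa [groundSupport_map_some]
  · rw [Sym.coe_mk, groundSupport_replicate_none_add, groundSupport_map_some]

theorem numIndep_eq_ncard_isIndepMonomial [Finite α] (M : Matroid α) {j k n : ℕ} (h : j + k = n) :
    numIndep M k = {e : Sym (Option α) n |
      IsIndepMonomial M e ∧ (e : Multiset (Option α)).count none = j}.ncard := by
  unfold numIndep
  refine (Set.ncard_congr
    (fun (e : Sym (Option α) n) _ ↦ groundSupport (e : Multiset (Option α))) ?_ ?_ ?_).symm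
  · rintro e ⟨he, hcount⟩
    have hcard := he.count_none_add_ncard
    rw [hcount, Sym.card_coe] at hcard
    exact ⟨he.2, by omega⟩
  · rintro e e' ⟨he, -⟩ ⟨he', -⟩ heq
    exact Subtype.ext (he.eq_of_groundSupport_eq he' (by simp) heq)
  · rintro S ⟨hS, hcard⟩
    obtain ⟨e, he, rfl⟩ := exists_isIndepMonomial_groundSupport_eq hS (n := n) (by omega)
    have hcount := he.count_none_add_ncard
    rw [Sym.card_coe] at hcount
    exact ⟨e, ⟨he, by omega⟩, rfl⟩

end IndepMonomials

section IndepPolynomial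

open Matrix

variable {α : Type*} [DecidableEq α] {n : ℕ}

open Classical in
/-- The coefficients of the polynomial `∑ εʲ x₀ʲ ∏ a ∈ S, xₐ`, summed over the independent sets `S`
of `M`, where `j = n - |S|`. -/
noncomputable def indepCoeff (M : Matroid α) (n : ℕ) (ε : ℝ) (e : Sym (Option α) n) : ℝ :=
  if IsIndepMonomial M e then ε ^ (e : Multiset (Option α)).count none else 0

variable {M : Matroid α} {ε : ℝ}

theorem indepCoeff_nonneg (hε : 0 ≤ ε) : 0 ≤ indepCoeff M n ε := by
  intro e
  unfold indepCoeff
  split_ifs <;> positivity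

theorem indepCoeff_pos_iff (hε : 0 < ε) {e : Sym (Option α) n} :
    0 < indepCoeff M n ε e ↔ IsIndepMonomial M e := by
  unfold indepCoeff
  split_ifs with he
  · exact iff_of_true (by positivity) he
  · exact iff_of_false (lt_irrefl 0) he

variable [Fintype α]

theorem iterDerivAtOne_indepCoeff_pos_iff (hε : 0 < ε) {m : Multiset (Option α)} (hm : m.card ≤ n) :
    0 < iterDerivAtOne (indepCoeff M n ε) m ↔ IsIndepMonomial M m := by
  rw [iterDerivAtOne_pos_iff (indepCoeff_nonneg hε.le)]
  simp only [indepCoeff_pos_iff hε]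
  refine ⟨fun ⟨e, he, hme⟩ ↦ he.of_le hme, fun h ↦ ?_⟩
  exact ⟨Sym.mk (Multiset.replicate (n - m.card) none + m) (by simp [hm]),
    (isIndepMonomial_replicate_none_add _).2 h, Multiset.le_add_left _ _⟩

open Classical in
theorem iterDerivAtOne_indepCoeff_of_card_eq {m : Multiset (Option α)} (hm : m.card = n) :
    iterDerivAtOne (indepCoeff M n ε) m =
      if IsIndepMonomial M m then (m.count none).factorial * ε ^ m.count none else 0 := by
  rw [iterDerivAtOne_of_card_eq _ hm, indepCoeff, Sym.coe_mk]
  split_ifs with h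
  · rw [Fintype.prod_option,
      Finset.prod_eq_one fun a _ ↦ Nat.factorial_eq_one.2 (h.1 a), mul_one, mul_comm]
  · rw [zero_mul]

theorem iterDerivAtOne_indepCoeff_cons_none_cons_none {m : Multiset (Option α)}
    (hm : m.card + 2 = n) (hI : IsIndepMonomial M m) :
    iterDerivAtOne (indepCoeff M n ε) (none ::ₘ none ::ₘ m) =
      (m.count none).factorial * ε ^ m.count none *
        ((m.count none + 2) * (m.count none + 1) * ε ^ 2) := by
  rw [iterDerivAtOne_indepCoeff_of_card_eq (by simpa [add_assoc] using hm),
    if_pos (by simpa only [isIndepMonomial_cons_none]), Multiset.count_cons_self,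
    Multiset.count_cons_self, Nat.factorial_succ, Nat.factorial_succ]
  push_cast
  ring

open Classical in
theorem iterDerivAtOne_indepCoeff_cons_none_cons_some {m : Multiset (Option α)}
    (hm : m.card + 2 = n) (a : α) :
    iterDerivAtOne (indepCoeff M n ε) (none ::ₘ some a ::ₘ m) =
      if IsIndepMonomial M (some a ::ₘ m) then
        (m.count none).factorial * ε ^ m.count none * ((m.count none + 1) * ε) else 0 := by
  rw [iterDerivAtOne_indepCoeff_of_card_eq (by simpa [add_assoc] using hm),
    isIndepMonomial_cons_none, Multiset.count_cons_self, Multiset.count_cons_of_ne (by simp),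
    Nat.factorial_succ]
  refine if_congr Iff.rfl ?_ rfl
  push_cast
  ring

open Classical in
theorem iterDerivAtOne_indepCoeff_cons_some_cons_some {m : Multiset (Option α)}
    (hm : m.card + 2 = n) (a b : α) :
    iterDerivAtOne (indepCoeff M n ε) (some a ::ₘ some b ::ₘ m) =
      if IsIndepMonomial M (some a ::ₘ m) then if IsIndepMonomial M (some b ::ₘ m) then
        if M.closure (insert a (groundSupport m)) ≠ M.closure (insert b (groundSupport m))
        then (m.count none).factorial * ε ^ m.count none else 0 else 0 else 0 := by
  rw [iterDerivAtOne_indepCoeff_of_card_eq (by simpa [add_assoc] using hm),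
    Multiset.count_cons_of_ne (by simp), Multiset.count_cons_of_ne (by simp), ← ite_and, ← ite_and]
  exact if_congr (by rw [isIndepMonomial_cons_some_cons_some_iff, and_assoc]) rfl rfl

open Classical in
theorem dotProduct_hessianAtOne_indepCoeff {m : Multiset (Option α)} (hm : m.card + 2 = n)
    (hI : IsIndepMonomial M m) (v : Option α → ℝ) :
    v ⬝ᵥ hessianAtOne (indepCoeff M n ε) m *ᵥ v =
      (m.count none).factorial * ε ^ m.count none *
        ((m.count none + 2) * (m.count none + 1) * (ε * v none) ^ 2 +
          2 * (m.count none + 1) * (ε * v none) *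
            ∑ a with IsIndepMonomial M (some a ::ₘ m), v (some a) +
          ∑ a with IsIndepMonomial M (some a ::ₘ m), ∑ b with IsIndepMonomial M (some b ::ₘ m),
            if M.closure (insert a (groundSupport m)) ≠ M.closure (insert b (groundSupport m))
            then v (some a) * v (some b) else 0) := by
  set c : ℝ := (m.count none).factorial * ε ^ m.count none with hc
  rw [dotProduct_mulVec_option (isSymm_hessianAtOne _ m)]
  simp only [hessianAtOne, of_apply, iterDerivAtOne_indepCoeff_cons_none_cons_none hm hI,
    iterDerivAtOne_indepCoeff_cons_none_cons_some hm,
    iterDerivAtOne_indepCoeff_cons_some_cons_some hm, ← hc, Finset.sum_filter, ite_mul, zero_mul,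
    Finset.sum_ite_irrel, Finset.sum_const_zero, mul_add c, Finset.mul_sum]
  refine congrArg₂ (· + ·) (congrArg₂ (· + ·) ?_ ?_) ?_
  · ring
  · refine Finset.sum_congr rfl fun a _ ↦ ?_
    split_ifs <;> ring
  · refine Finset.sum_congr rfl fun a _ ↦ ?_
    simp only [mul_ite, mul_zero, Finset.mul_sum]

open Classical in
theorem card_isIndepMonomial_cons_some_le (hn : Fintype.card α ≤ n) {m : Multiset (Option α)}
    (hm : m.card + 2 = n) (hI : IsIndepMonomial M m) :
    (Finset.univ.filter fun a ↦ IsIndepMonomial M (some a ::ₘ m)).card ≤ m.count none + 2 := by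
  have hdisj : Disjoint (Finset.univ.filter fun a ↦ IsIndepMonomial M (some a ::ₘ m))
      (groundSupport m).toFinset := by
    rw [Finset.disjoint_left]
    simp +contextual [hI.cons_some_iff]
  have hcard := hI.count_none_add_ncard
  have hle := (Finset.card_union_of_disjoint hdisj).symm.trans_le (Finset.card_le_univ _)
  rw [← Set.ncard_eq_toFinset_card'] at hle
  omega

theorem hessianAtOne_indepCoeff_eq_zero (hε : 0 < ε) {m : Multiset (Option α)}
    (hm : m.card + 2 ≤ n) (hI : ¬ IsIndepMonomial M m) :
    hessianAtOne (indepCoeff M n ε) m = 0 := by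
  ext i j
  have hnonneg := hessianAtOne_nonneg (indepCoeff_nonneg (M := M) (n := n) hε.le) m i j
  refine hnonneg.antisymm' (not_lt.1 fun hpos ↦ hI ?_)
  have hij := (iterDerivAtOne_indepCoeff_pos_iff hε (by simpa [add_assoc] using hm)).1 hpos
  exact hij.of_le ((Multiset.le_cons_self _ _).trans (Multiset.le_cons_self _ _))

theorem isHyperbolicAt_hessianAtOne_indepCoeff_of_card_add_two_eq (hn : Fintype.card α ≤ n)
    (hε : 0 < ε) {m : Multiset (Option α)} (hm : m.card + 2 = n) :
    IsHyperbolicAt (hessianAtOne (indepCoeff M n ε) m) 1 := by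
  classical
  by_cases hI : IsIndepMonomial M m
  swap
  · intro v
    simp [hessianAtOne_indepCoeff_eq_zero hε hm.le hI]
  have hp : 0 ≤ (1 : Option α → ℝ) ⬝ᵥ hessianAtOne (indepCoeff M n ε) m *ᵥ 1 :=
    dotProduct_nonneg_of_nonneg zero_le_one
      (mulVec_one_nonneg (hessianAtOne_nonneg (indepCoeff_nonneg hε.le) m))
  -- With `j = m.count none`, and `Y`, `X` the sums of `v` over elements and over pairs, the form
  -- is a multiple of `X - (j + 1) / (j + 2) * Y ^ 2` on the hyperplane
  -- `(j + 2) * (ε * v none) + Y = 0`.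
  refine isHyperbolicAt_of_nonpos_of_orthogonal (isSymm_hessianAtOne _ m) hp
    (fun i ↦ i.elim ((m.count none + 2) * ε)
      fun a ↦ if IsIndepMonomial M (some a ::ₘ m) then 1 else 0) fun v hv ↦ ?_
  rw [dotProduct_hessianAtOne_indepCoeff hm hI]
  refine mul_nonpos_of_nonneg_of_nonpos (by positivity) ?_
  have hturan := mul_sum_ne_le_mul_sum_sq _
    (fun a ↦ M.closure (insert a (groundSupport m))) (fun a ↦ v (some a))
    (card_isIndepMonomial_cons_some_le hn hm hI)
  simp only [dotProduct, Fintype.sum_option, Option.elim, ite_mul, one_mul, zero_mul,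
    ← Finset.sum_filter] at hv
  set Y := ∑ a with IsIndepMonomial M (some a ::ₘ m), v (some a)
  have hY : Y = -((m.count none + 2) * (ε * v none)) := by linarith
  rw [hY] at hturan ⊢
  push_cast at hturan
  have hpos : (0 : ℝ) < m.count none + 2 := by positivity
  refine le_of_mul_le_mul_left ?_ hpos
  linarith

theorem isHyperbolicAt_hessianAtOne_indepCoeff (hn : Fintype.card α ≤ n) (hε : 0 < ε)
    {m : Multiset (Option α)} {d : ℕ} (hd : m.card + 2 + d = n) :
    IsHyperbolicAt (hessianAtOne (indepCoeff M n ε) m) 1 := by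
  refine isHyperbolicAt_hessianAtOne (indepCoeff_nonneg hε.le) none (fun m i hm hpos ↦ ?_)
    (fun m ↦ isHyperbolicAt_hessianAtOne_indepCoeff_of_card_add_two_eq hn hε) hd
  rw [iterDerivAtOne_indepCoeff_pos_iff hε (by rwa [Multiset.card_cons])] at hpos ⊢
  exact isIndepMonomial_cons_none.2 (hpos.of_le (Multiset.le_cons_self m i))

open Classical in
theorem iterDerivAtOne_indepCoeff_replicate_none (M : Matroid α) (ε : ℝ) (j : ℕ) :
    iterDerivAtOne (indepCoeff M n ε) (Multiset.replicate j none) =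
      ∑ e : Sym (Option α) n, if IsIndepMonomial M e then
        ε ^ (e : Multiset (Option α)).count none *
          ((e : Multiset (Option α)).count none).descFactorial j else 0 := by
  refine Finset.sum_congr rfl fun e _ ↦ ?_
  simp [indepCoeff, Fintype.prod_option, Multiset.count_replicate]

theorem exists_continuous_iterDerivAtOne_indepCoeff_replicate_none (M : Matroid α) {j k : ℕ}
    (h : j + k = n) :
    ∃ g : ℝ → ℝ, Continuous g ∧ g 0 = j.factorial * numIndep M k ∧
      ∀ ε, iterDerivAtOne (indepCoeff M n ε) (Multiset.replicate j none) = ε ^ j * g ε := by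
  classical
  let c (e : Sym (Option α) n) : ℕ := (e : Multiset (Option α)).count none
  refine ⟨fun ε ↦ ∑ e : Sym (Option α) n,
    if IsIndepMonomial M e then ε ^ (c e - j) * (c e).descFactorial j else 0, ?_, ?_, fun ε ↦ ?_⟩
  · refine continuous_finsetSum _ fun e _ ↦ ?_
    split_ifs <;> fun_prop
  · have hterm (e : Sym (Option α) n) :
        (if IsIndepMonomial M e then (0 : ℝ) ^ (c e - j) * (c e).descFactorial j else 0) =
          if IsIndepMonomial M e ∧ c e = j then (j.factorial : ℝ) else 0 := by
      rw [ite_and]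
      refine if_congr Iff.rfl ?_ rfl
      rcases lt_trichotomy (c e) j with hlt | heq | hgt
      · simp [Nat.descFactorial_of_lt hlt, hlt.ne]
      · simp [heq, Nat.descFactorial_self]
      · simp [hgt.ne', Nat.sub_ne_zero_of_lt hgt]
    simp only [hterm]
    rw [← Finset.sum_filter, Finset.sum_const, nsmul_eq_mul, mul_comm,
      numIndep_eq_ncard_isIndepMonomial M h, ← Set.ncard_coe_finset, Finset.coe_filter_univ]
  · rw [iterDerivAtOne_indepCoeff_replicate_none, Finset.mul_sum]
    refine Finset.sum_congr rfl fun e _ ↦ ?_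
    rw [mul_ite, mul_zero]
    refine if_congr Iff.rfl ?_ rfl
    rcases lt_or_ge (c e) j with hlt | hge
    · rw [Nat.descFactorial_of_lt hlt, Nat.cast_zero, mul_zero, mul_zero, mul_zero]
    · rw [← mul_assoc, ← pow_add, Nat.add_sub_cancel' hge]

end IndepPolynomial

theorem numIndep_mul_le_sq {α : Type*} [Fintype α] (M : Matroid α) {d j : ℕ}
    (hn : Fintype.card α ≤ j + d + 2) :
    ((d + 2) * (j + 2) * (numIndep M d * numIndep M (d + 2)) : ℝ) ≤
      (d + 1) * (j + 1) * numIndep M (d + 1) ^ 2 := by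
  classical
  have hexp (i k : ℕ) (h : i + k = j + d + 2) :=
    exists_continuous_iterDerivAtOne_indepCoeff_replicate_none M h
  obtain ⟨f, hf, hf0, hfε⟩ := hexp j (d + 2) (by omega)
  obtain ⟨g, hg, hg0, hgε⟩ := hexp (j + 1) (d + 1) (by omega)
  obtain ⟨h, hh, hh0, hhε⟩ := hexp (j + 2) d (by omega)
  have hle (ε : ℝ) (hε : ε ∈ Set.Ioi 0) : (d + 2) * (h ε * f ε) ≤ (d + 1) * g ε ^ 2 := by
    have hε0 : 0 < ε := hε
    have hd : (Multiset.replicate j (none : Option α)).card + 2 + d = j + d + 2 := by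
      rw [Multiset.card_replicate]
      omega
    have hsq := iterDerivAtOne_mul_le_sq _ hd
      (isHyperbolicAt_hessianAtOne_indepCoeff (M := M) hn hε hd) none
    rw [← Multiset.replicate_succ, ← Multiset.replicate_succ, hfε, hgε, hhε] at hsq
    refine le_of_mul_le_mul_left ?_ (pow_pos hε0 (2 * j + 2))
    linear_combination hsq
  have hlim := le_on_closure hle (by fun_prop) (by fun_prop) (x := 0) (by simp)
  rw [hf0, hg0, hh0, Nat.factorial_succ (j + 1), Nat.factorial_succ j] at hlim
  push_cast at hlim
  have hpos : (0 : ℝ) < (j + 1) * (j.factorial : ℝ) ^ 2 := by positivity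
  refine le_of_mul_le_mul_left ?_ hpos
  linear_combination hlim

theorem numIndep_restrictSubtype_ground {α : Type*} (M : Matroid α) (k : ℕ) :
    numIndep (M.restrictSubtype M.E) k = numIndep M k := by
  unfold numIndep
  refine Set.ncard_congr (fun S _ ↦ Subtype.val '' S) ?_ ?_ ?_
  · rintro S ⟨hS, hcard⟩
    exact ⟨Matroid.restrictSubtype_indep_iff.1 hS,
      by rwa [Set.ncard_image_of_injective _ Subtype.val_injective]⟩
  · rintro S T - - heq
    exact Set.image_injective.2 Subtype.val_injective heq
  · rintro S ⟨hS, hcard⟩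
    have himage : Subtype.val '' (Subtype.val ⁻¹' S : Set M.E) = S :=
      Subtype.image_preimage_coe _ _ |>.trans (Set.inter_eq_right.2 hS.subset_ground)
    refine ⟨Subtype.val ⁻¹' S, ⟨?_, ?_⟩, himage⟩
    · rwa [Matroid.restrictSubtype_indep_iff, himage]
    · rw [← hcard, ← Set.ncard_image_of_injective _ Subtype.val_injective, himage]

theorem matroidRk_le_ncard_ground {α : Type*} (M : Matroid α) [M.Finite] :
    matroidRk M ≤ M.E.ncard := by
  refine csSup_le ⟨0, ∅, M.empty_indep, Set.ncard_empty α⟩ ?_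
  rintro _ ⟨S, hS, rfl⟩
  exact Set.ncard_le_ncard hS.subset_ground M.ground_finite

theorem stmt_5_general {α : Type*} (M : Matroid α) [M.Finite] (k : ℕ) (hk : 1 ≤ k)
    (hkE : k < M.E.ncard) :
    ((numIndep M k : ℝ)) ^ 2 ≥
      (1 + 1 / (k : ℝ)) * (1 + 1 / ((M.E.ncard : ℝ) - (k : ℝ))) *
        (numIndep M (k - 1) : ℝ) * (numIndep M (k + 1) : ℝ) := by
  classical
  have := M.ground_finite.fintype
  obtain ⟨d, rfl⟩ := Nat.exists_eq_add_of_le' hk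
  obtain ⟨j, hj⟩ := Nat.exists_eq_add_of_lt hkE
  have hcard : Fintype.card M.E = j + d + 2 := by
    rw [← Nat.card_eq_fintype_card, Nat.card_coe_set_eq]
    omega
  have hle := numIndep_mul_le_sq (M.restrictSubtype M.E) hcard.le
  simp only [numIndep_restrictSubtype_ground] at hle
  have hfactor : (1 + 1 / ((d + 1 : ℕ) : ℝ)) * (1 + 1 / ((M.E.ncard : ℝ) - (d + 1 : ℕ))) =
      (d + 2) * (j + 2) / ((d + 1) * (j + 1)) := by
    rw [hj]
    push_cast
    rw [show (d : ℝ) + 1 + j + 1 - (d + 1) = j + 1 by ring]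
    field_simp
    ring
  rw [ge_iff_le, hfactor, Nat.add_sub_cancel, mul_assoc, div_mul_eq_mul_div,
    div_le_iff₀ (by positivity)]
  linear_combination hle

/-- Ultra-log-concavity for matroids (strong Mason conjecture). -/
theorem stmt_5 {α : Type*} [Fintype α] (M : Matroid α) (hE : M.E = Set.univ)
    (k : ℕ) (hk : 1 ≤ k) (hk' : k < matroidRk M) :
    ((numIndep M k : ℝ)) ^ 2 ≥
      (1 + 1 / (k : ℝ)) * (1 + 1 / ((Fintype.card α : ℝ) - (k : ℝ))) *
        (numIndep M (k - 1) : ℝ) * (numIndep M (k + 1) : ℝ) := by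
  have hcard : M.E.ncard = Fintype.card α := by
    rw [hE, Set.ncard_univ, Nat.card_eq_fintype_card]
  exact hcard ▸ stmt_5_general M k hk (hk'.trans_le (matroidRk_le_ncard_ground M))
end

section
/- (Alexandrov–Fenchel inequality in the plane.) Let A and B be convex polygons in the plane, i.e. convex hulls of nonempty finite subsets of ℝ². Then (area(A + B) − area(A) − area(B))² ≥ 4 · area(A) · area(B). Equivalently, the mixed area V(A,B) := (area(A+B) − area(A) − area(B))/2 satisfies V(A,B)² ≥ area(A) · area(B). -/
open MeasureTheory
open scoped Pointwise

/-!
Slice both sets by vertical lines, and let `a` and `b` be the largest lengths of a slice of `A` and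
of `B`. The slice of `A + B` over `x + y` contains the sum of the slice of `A` over `x` and that of
`B` over `y`, so one-dimensional Brunn–Minkowski bounds its length from below. After dividing the
three length functions by `a`, `b` and `a + b`, each superlevel set of the last one contains the sum
of those of the first two. The first two now have the same supremum, so their superlevel sets are
nonempty at the same levels, one-dimensional Brunn–Minkowski applies again, and integrating over the
level gives Bonnesen's inequality `|A| / a + |B| / b ≤ |A + B| / (a + b)`. Multiplied by `a + b` it
reads `|A + B| - |A| - |B| ≥ |A| b / a + |B| a / b`, and AM-GM eliminates `a` and `b`.
-/

section OrderedField

variable {𝕜 : Type*} [Field 𝕜] [LinearOrder 𝕜] [IsStrictOrderedRing 𝕜] {a b : 𝕜}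

theorem isLUB_range_div {ι : Type*} {f : ι → 𝕜} (hf : IsLUB (Set.range f) a) (ha : 0 < a) :
    IsLUB (Set.range fun i => f i / a) 1 := by
  rw [← div_self ha.ne']
  have div_isLUB := (OrderIso.divRight₀ a ha).isLUB_image'.2 hf
  rwa [← Set.range_comp] at div_isLUB

theorem min_div_le_add_div_add {s t : 𝕜} (ha : 0 < a) (hb : 0 < b) :
    min (s / a) (t / b) ≤ (s + t) / (a + b) := by
  rw [le_div_iff₀ (add_pos ha hb), mul_add]
  gcongr
  · exact (le_div_iff₀ ha).1 (min_le_left _ _)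
  · exact (le_div_iff₀ hb).1 (min_le_right _ _)

theorem four_mul_mul_le_sq_of_div_add_div_le {p q r : 𝕜} (ha : 0 < a) (hb : 0 < b)
    (hp : 0 ≤ p) (hq : 0 ≤ q) (h : p / a + q / b ≤ r / (a + b)) : 4 * p * q ≤ (r - p - q) ^ 2 := by
  have cross_terms_le : p * (b / a) + q * (a / b) ≤ r - p - q := by
    have h_mul := (le_div_iff₀ (add_pos ha hb)).1 h
    have expand : (p / a + q / b) * (a + b) = p + q + (p * (b / a) + q * (a / b)) := by
      field_simp
      ring
    linarith
  calc 4 * p * q = 4 * (p * (b / a)) * (q * (a / b)) := by field_simp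
    _ ≤ (p * (b / a) + q * (a / b)) ^ 2 := four_mul_le_sq_add _ _
    _ ≤ (r - p - q) ^ 2 := by gcongr

end OrderedField

section BrunnMinkowski

variable {G : Type*} [AddCommGroup G] [LinearOrder G] [IsOrderedAddMonoid G]
  [TopologicalSpace G] [OrderTopology G] [MeasurableSpace G] [BorelSpace G]
  {μ : Measure G} [μ.IsAddLeftInvariant] [NullSingletonClass μ]

theorem measure_add_measure_le_measure_add_of_isCompact {K L : Set G}
    (hK : IsCompact K) (hL : IsCompact L) (hK₀ : K.Nonempty) (hL₀ : L.Nonempty) :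
    μ K + μ L ≤ μ (K + L) := by
  obtain ⟨b, hbK, hb⟩ := hK.exists_isGreatest hK₀
  obtain ⟨c, hcL, hc⟩ := hL.exists_isLeast hL₀
  have translates_subset : (c +ᵥ K) ∪ (b +ᵥ L) ⊆ K + L :=
    Set.union_subset (add_comm L K ▸ Set.vadd_set_subset_add hcL) (Set.vadd_set_subset_add hbK)
  have translates_inter : (c +ᵥ K) ∩ (b +ᵥ L) ⊆ {b + c} := by
    rintro _ ⟨⟨x, hx, rfl⟩, y, hy, hxy : b + y = c + x⟩
    exact le_antisymm ((add_le_add_right (hb hx) c).trans_eq (add_comm c b))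
      ((add_le_add_right (hc hy) b).trans_eq hxy)
  calc μ K + μ L = μ (c +ᵥ K) + μ (b +ᵥ L) := by rw [measure_vadd, measure_vadd]
    _ = μ ((c +ᵥ K) ∪ (b +ᵥ L)) :=
      (measure_union₀ (hL.vadd b).measurableSet.nullMeasurableSet
        (measure_mono_null translates_inter (measure_singleton _))).symm
    _ ≤ μ (K + L) := measure_mono translates_subset

variable [μ.InnerRegular]

/-- The one-dimensional **Brunn–Minkowski inequality**. -/
theorem measure_add_measure_le_measure_add {X Y : Set G} (hX : MeasurableSet X)
    (hY : MeasurableSet Y) (hX₀ : X.Nonempty) (hY₀ : Y.Nonempty) :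
    μ X + μ Y ≤ μ (X + Y) := by
  obtain ⟨x, hx⟩ := hX₀
  obtain ⟨y, hy⟩ := hY₀
  simp only [hX.measure_eq_iSup_isCompact, hY.measure_eq_iSup_isCompact, iSup_and']
  refine ENNReal.biSup_add_biSup_le' ⟨∅, X.empty_subset, isCompact_empty⟩
    ⟨∅, Y.empty_subset, isCompact_empty⟩ fun K ⟨hKX, hK⟩ L ⟨hLY, hL⟩ => ?_
  calc μ K + μ L ≤ μ (insert x K) + μ (insert y L) := by
        gcongr <;> exact Set.subset_insert _ _
    _ ≤ μ (insert x K + insert y L) :=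
      measure_add_measure_le_measure_add_of_isCompact (hK.insert x) (hL.insert y)
        (Set.insert_nonempty x K) (Set.insert_nonempty y L)
    _ ≤ μ (X + Y) := by
      gcongr
      exacts [Set.insert_subset hx hKX, Set.insert_subset hy hLY]

variable {f g h : G → ℝ} {m : ℝ}

theorem measure_superlevel_add_le_of_min_le (hf : Measurable f) (hg : Measurable g)
    (hfm : IsLUB (Set.range f) m) (hgm : IsLUB (Set.range g) m)
    (hmin : ∀ x y, min (f x) (g y) ≤ h (x + y)) (t : ℝ) :
    μ {x | t < f x} + μ {y | t < g y} ≤ μ {z | t < h z} := by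
  rcases lt_or_ge t m with htm | hmt
  · obtain ⟨_, ⟨x₀, rfl⟩, hx₀⟩ := (lt_isLUB_iff hfm).1 htm
    obtain ⟨_, ⟨y₀, rfl⟩, hy₀⟩ := (lt_isLUB_iff hgm).1 htm
    have superlevel_add : {x | t < f x} + {y | t < g y} ⊆ {z | t < h z} := by
      rintro _ ⟨x, hx, y, hy, rfl⟩
      exact (lt_min hx hy).trans_le (hmin x y)
    calc μ {x | t < f x} + μ {y | t < g y} ≤ μ ({x | t < f x} + {y | t < g y}) :=
          measure_add_measure_le_measure_add (measurableSet_lt measurable_const hf)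
            (measurableSet_lt measurable_const hg) ⟨x₀, hx₀⟩ ⟨y₀, hy₀⟩
      _ ≤ μ {z | t < h z} := measure_mono superlevel_add
  · have hf_empty : {x | t < f x} = ∅ :=
      Set.eq_empty_of_forall_notMem fun x => ((hfm.1 ⟨x, rfl⟩).trans hmt).not_gt
    have hg_empty : {y | t < g y} = ∅ :=
      Set.eq_empty_of_forall_notMem fun y => ((hgm.1 ⟨y, rfl⟩).trans hmt).not_gt
    simp only [hf_empty, hg_empty, measure_empty, add_zero, zero_le]

theorem lintegral_add_lintegral_le_of_min_le (hf : Measurable f) (hg : Measurable g)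
    (hh : AEMeasurable h μ) (hf₀ : 0 ≤ f) (hg₀ : 0 ≤ g) (hh₀ : 0 ≤ h)
    (hfm : IsLUB (Set.range f) m) (hgm : IsLUB (Set.range g) m)
    (hmin : ∀ x y, min (f x) (g y) ≤ h (x + y)) :
    ∫⁻ x, ENNReal.ofReal (f x) ∂μ + ∫⁻ y, ENNReal.ofReal (g y) ∂μ ≤
      ∫⁻ z, ENNReal.ofReal (h z) ∂μ := by
  have measure_superlevel_antitone : Antitone fun t => μ {x | t < f x} :=
    fun _ _ hst => measure_mono fun _ => hst.trans_lt
  rw [lintegral_eq_lintegral_meas_lt μ (.of_forall hf₀) hf.aemeasurable,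
    lintegral_eq_lintegral_meas_lt μ (.of_forall hg₀) hg.aemeasurable,
    lintegral_eq_lintegral_meas_lt μ (.of_forall hh₀) hh,
    ← lintegral_add_left measure_superlevel_antitone.measurable]
  exact lintegral_mono (measure_superlevel_add_le_of_min_le hf hg hfm hgm hmin)

theorem integral_add_integral_le_of_min_le (hf : Measurable f) (hg : Measurable g)
    (hh : Integrable h μ) (hf₀ : 0 ≤ f) (hg₀ : 0 ≤ g)
    (hfm : IsLUB (Set.range f) m) (hgm : IsLUB (Set.range g) m)
    (hmin : ∀ x y, min (f x) (g y) ≤ h (x + y)) :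
    ∫ x, f x ∂μ + ∫ y, g y ∂μ ≤ ∫ z, h z ∂μ := by
  have hh₀ : 0 ≤ h := fun z => by simpa using (le_min (hf₀ z) (hg₀ 0)).trans (hmin z 0)
  have lintegral_le := lintegral_add_lintegral_le_of_min_le hf hg hh.1.aemeasurable
    hf₀ hg₀ hh₀ hfm hgm hmin
  have lintegral_h_ne_top : ∫⁻ z, ENNReal.ofReal (h z) ∂μ ≠ ⊤ := hh.lintegral_lt_top.ne
  obtain ⟨lintegral_f_ne_top, lintegral_g_ne_top⟩ :=
    ENNReal.add_ne_top.1 (ne_top_of_le_ne_top lintegral_h_ne_top lintegral_le)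
  rw [integral_eq_lintegral_of_nonneg_ae (.of_forall hf₀) hf.aestronglyMeasurable,
    integral_eq_lintegral_of_nonneg_ae (.of_forall hg₀) hg.aestronglyMeasurable,
    integral_eq_lintegral_of_nonneg_ae (.of_forall hh₀) hh.1,
    ← ENNReal.toReal_add lintegral_f_ne_top lintegral_g_ne_top]
  exact ENNReal.toReal_mono lintegral_h_ne_top lintegral_le

theorem integral_div_add_integral_div_le {a b : ℝ} (ha : 0 < a) (hb : 0 < b) (hf : Measurable f)
    (hg : Measurable g) (hh : Integrable h μ) (hf₀ : 0 ≤ f) (hg₀ : 0 ≤ g) (hh₀ : 0 ≤ h)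
    (hfa : IsLUB (Set.range f) a) (hgb : IsLUB (Set.range g) b)
    (hadd : ∀ x y, 0 < f x → 0 < g y → f x + g y ≤ h (x + y)) :
    (∫ x, f x ∂μ) / a + (∫ y, g y ∂μ) / b ≤ (∫ z, h z ∂μ) / (a + b) := by
  have min_le (x y : G) : min (f x / a) (g y / b) ≤ h (x + y) / (a + b) := by
    have hz₀ : 0 ≤ h (x + y) / (a + b) := div_nonneg (hh₀ _) (add_pos ha hb).le
    rcases (hf₀ x).eq_or_lt with hfx | hfx
    · exact (min_le_left _ _).trans (by simpa [← hfx] using hz₀)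
    rcases (hg₀ y).eq_or_lt with hgy | hgy
    · exact (min_le_right _ _).trans (by simpa [← hgy] using hz₀)
    calc min (f x / a) (g y / b) ≤ (f x + g y) / (a + b) := min_div_le_add_div_add ha hb
      _ ≤ h (x + y) / (a + b) := by
        gcongr
        exact hadd x y hfx hgy
  simp only [← integral_div]
  exact integral_add_integral_le_of_min_le (hf.div_const a) (hg.div_const b) (hh.div_const _)
    (fun x => div_nonneg (hf₀ x) ha.le) (fun y => div_nonneg (hg₀ y) hb.le)
    (isLUB_range_div hfa ha) (isLUB_range_div hgb hb) min_le

end BrunnMinkowski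

section Sections

variable {α β : Type*} [MeasurableSpace β] {ν : Measure β}

/-- The supremum over `x` of the `ν`-measures of the vertical sections `{y | (x, y) ∈ A}`, the width
that enters Bonnesen's inequality. It is real-valued, so it takes the junk value `0` when the
measures are unbounded; they are bounded when `A` is compact. -/
noncomputable def maxSectionMeasure (ν : Measure β) (A : Set (α × β)) : ℝ :=
  ⨆ x, ν.real (Prod.mk x ⁻¹' A)

theorem integral_measureReal_prodMk_left [MeasurableSpace α] {μ : Measure α} [SFinite ν]
    {A : Set (α × β)} (hA : MeasurableSet A) (hA_fin : (μ.prod ν) A ≠ ⊤) :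
    ∫ x, ν.real (Prod.mk x ⁻¹' A) ∂μ = (μ.prod ν).real A := by
  rw [measureReal_def, Measure.prod_apply hA]
  exact integral_toReal (measurable_measure_prodMk_left hA).aemeasurable
    (Measure.ae_measure_lt_top hA hA_fin)

theorem maxSectionMeasure_pos [MeasurableSpace α] {μ : Measure α} [SFinite ν] {A : Set (α × β)}
    (hA : MeasurableSet A) (hA_bdd : BddAbove (Set.range fun x => ν.real (Prod.mk x ⁻¹' A)))
    (hA_pos : 0 < (μ.prod ν).real A) : 0 < maxSectionMeasure ν A := by
  by_contra! hle
  have sections_null (x : α) : ν.real (Prod.mk x ⁻¹' A) = 0 :=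
    le_antisymm ((le_ciSup hA_bdd x).trans hle) measureReal_nonneg
  have hA_fin : (μ.prod ν) A ≠ ⊤ := (ENNReal.toReal_pos_iff.1 hA_pos).2.ne
  simp [← integral_measureReal_prodMk_left hA hA_fin, sections_null] at hA_pos

theorem bddAbove_range_measureReal_section [TopologicalSpace α] [TopologicalSpace β]
    [IsFiniteMeasureOnCompacts ν] {A : Set (α × β)} (hA : IsCompact A) :
    BddAbove (Set.range fun x => ν.real (Prod.mk x ⁻¹' A)) := by
  refine ⟨ν.real (Prod.snd '' A), ?_⟩
  rintro _ ⟨x, rfl⟩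
  exact measureReal_mono (fun y hy => ⟨(x, y), hy, rfl⟩)
    (hA.image continuous_snd).measure_lt_top.ne

end Sections

theorem isCompact_preimage_prodMk {X Y : Type*} [TopologicalSpace X] [TopologicalSpace Y]
    [T2Space X] [T2Space Y] {A : Set (X × Y)} (hA : IsCompact A) (x : X) :
    IsCompact (Prod.mk x ⁻¹' A) :=
  (hA.image continuous_snd).of_isClosed_subset (hA.isClosed.preimage (Continuous.prodMk_right x))
    fun y hy => ⟨(x, y), hy, rfl⟩

theorem measureReal_section_add_le {H G : Type*} [Add H] [TopologicalSpace H] [ContinuousAdd H]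
    [T2Space H] [AddCommGroup G] [LinearOrder G] [IsOrderedAddMonoid G] [TopologicalSpace G]
    [OrderTopology G] [MeasurableSpace G] [BorelSpace G] {ν : Measure G} [ν.IsAddLeftInvariant]
    [NullSingletonClass ν] [IsFiniteMeasureOnCompacts ν] {A B : Set (H × G)}
    (hA : IsCompact A) (hB : IsCompact B) {x y : H}
    (hAx : (Prod.mk x ⁻¹' A).Nonempty) (hBy : (Prod.mk y ⁻¹' B).Nonempty) :
    ν.real (Prod.mk x ⁻¹' A) + ν.real (Prod.mk y ⁻¹' B) ≤
      ν.real (Prod.mk (x + y) ⁻¹' (A + B)) := by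
  have hAx_compact := isCompact_preimage_prodMk hA x
  have hBy_compact := isCompact_preimage_prodMk hB y
  have hAB_ne_top : ν (Prod.mk (x + y) ⁻¹' (A + B)) ≠ ⊤ :=
    (isCompact_preimage_prodMk (hA.add hB) (x + y)).measure_ne_top
  have sections_add : Prod.mk x ⁻¹' A + Prod.mk y ⁻¹' B ⊆ Prod.mk (x + y) ⁻¹' (A + B) := by
    rintro _ ⟨u, hu, v, hv, rfl⟩
    exact ⟨(x, u), hu, (y, v), hv, rfl⟩
  simp only [measureReal_def]
  rw [← ENNReal.toReal_add hAx_compact.measure_ne_top hBy_compact.measure_ne_top]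
  exact ENNReal.toReal_mono hAB_ne_top
    ((measure_add_measure_le_measure_add_of_isCompact hAx_compact hBy_compact hAx hBy).trans
      (measure_mono sections_add))

/-- **Bonnesen's inequality** in the plane. -/
theorem volume_div_add_volume_div_le {A B : Set (ℝ × ℝ)} (hA : IsCompact A) (hB : IsCompact B)
    (hA_pos : 0 < maxSectionMeasure volume A) (hB_pos : 0 < maxSectionMeasure volume B) :
    volume.real A / maxSectionMeasure volume A + volume.real B / maxSectionMeasure volume B ≤
      volume.real (A + B) / (maxSectionMeasure volume A + maxSectionMeasure volume B) := by
  have section_measurable {C : Set (ℝ × ℝ)} (hC : IsCompact C) :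
      Measurable fun x => volume.real (Prod.mk x ⁻¹' C) :=
    (measurable_measure_prodMk_left hC.measurableSet).ennreal_toReal
  have volume_eq_integral {C : Set (ℝ × ℝ)} (hC : IsCompact C) :
      volume.real C = ∫ x, volume.real (Prod.mk x ⁻¹' C) :=
    (integral_measureReal_prodMk_left hC.measurableSet hC.measure_ne_top).symm
  rw [volume_eq_integral hA, volume_eq_integral hB, volume_eq_integral (hA.add hB)]
  exact integral_div_add_integral_div_le hA_pos hB_pos (section_measurable hA)
    (section_measurable hB) (Measure.integrable_measure_prodMk_left (hA.add hB).measurableSet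
      (hA.add hB).measure_ne_top) (fun _ => measureReal_nonneg) (fun _ => measureReal_nonneg)
    (fun _ => measureReal_nonneg) (isLUB_ciSup (bddAbove_range_measureReal_section hA))
    (isLUB_ciSup (bddAbove_range_measureReal_section hB)) fun x y hx hy =>
      measureReal_section_add_le hA hB (nonempty_of_measureReal_ne_zero hx.ne')
        (nonempty_of_measureReal_ne_zero hy.ne')

theorem stmt_17_general {A B : Set (ℝ × ℝ)} (hA : IsCompact A) (hB : IsCompact B) :
    4 * volume.real A * volume.real B ≤
      (volume.real (A + B) - volume.real A - volume.real B) ^ 2 := by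
  rcases (measureReal_nonneg (μ := volume) (s := A)).eq_or_lt with hA_null | hA_pos
  · simpa [← hA_null] using sq_nonneg _
  rcases (measureReal_nonneg (μ := volume) (s := B)).eq_or_lt with hB_null | hB_pos
  · simpa [← hB_null] using sq_nonneg _
  have width_A_pos := maxSectionMeasure_pos hA.measurableSet
    (bddAbove_range_measureReal_section hA) hA_pos
  have width_B_pos := maxSectionMeasure_pos hB.measurableSet
    (bddAbove_range_measureReal_section hB) hB_pos
  exact four_mul_mul_le_sq_of_div_add_div_le width_A_pos width_B_pos hA_pos.le hB_pos.le
    (volume_div_add_volume_div_le hA hB width_A_pos width_B_pos)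

/-- The Alexandrov–Fenchel inequality in the plane: for convex polygons `A, B ⊆ ℝ²`,
`(area(A+B) − area(A) − area(B))² ≥ 4·area(A)·area(B)`; equivalently the mixed area
`V(A,B) = (area(A+B) − area(A) − area(B))/2` satisfies `V(A,B)² ≥ area(A)·area(B)`. -/
theorem stmt_17 (S T : Set (ℝ × ℝ)) (hSfin : S.Finite) (hSne : S.Nonempty)
    (hTfin : T.Finite) (hTne : T.Nonempty) :
    ((volume (convexHull ℝ S + convexHull ℝ T)).toReal -
        (volume (convexHull ℝ S)).toReal - (volume (convexHull ℝ T)).toReal) ^ 2 ≥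
      4 * (volume (convexHull ℝ S)).toReal * (volume (convexHull ℝ T)).toReal ∧
    (((volume (convexHull ℝ S + convexHull ℝ T)).toReal -
        (volume (convexHull ℝ S)).toReal - (volume (convexHull ℝ T)).toReal) / 2) ^ 2 ≥
      (volume (convexHull ℝ S)).toReal * (volume (convexHull ℝ T)).toReal := by
  have h := stmt_17_general (hSfin.isCompact_convexHull ℝ) (hTfin.isCompact_convexHull ℝ)
  exact ⟨h, by simp only [measureReal_def] at h; linarith⟩
end
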